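/- arXiv:2105.12630 — 4 statements merged into one kernel-verified Lean document; each statement's English description precedes it below -/
import Mathlib

section
/- Let G be a non-discrete, second countable t.d.l.c. group and let A be a finite simple group. The following are equivalent: (1) for every compact open subgroup U of G, A is a composition factor of U (A occurs among the quotients of some composition series of U); (2) there exist a compact open subgroup U of G and a composition series of U in which A occurs as a quotient at infinitely many indices; (3) for every compact open subgroup U of G there is a composition series of U in which A occurs as a quotient at infinitely many indices. -/
/-- A composition series of a profinite group `G`: a descending chain
`G = H 0 ⊵ H 1 ⊵ ⋯` of closed subgroups with trivial intersection such that at each step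
either `H (i+1)` is a proper normal subgroup of `H i` with simple quotient, or the chain
has already reached the trivial subgroup (this uniformly encodes finite series, padded by
the trivial subgroup, and infinite series). -/
structure ProfiniteCompositionSeries (G : Type*) [Group G] [TopologicalSpace G] where
  H : ℕ → Subgroup G
  top_eq : H 0 = ⊤
  isClosed : ∀ i, IsClosed (H i : Set G)
  antitone : ∀ i, H (i + 1) ≤ H i
  iInf_eq_bot : ⨅ i, H i = ⊥
  normal : ∀ i, ((H (i + 1)).subgroupOf (H i)).Normal
  step : ∀ i, (H (i + 1) < H i ∧
      (letI := normal i
       IsSimpleGroup (↥(H i) ⧸ (H (i + 1)).subgroupOf (H i)))) ∨ H i = ⊥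

/-- The `i`-th composition factor `H i / H (i+1)` of a composition series. -/
def ProfiniteCompositionSeries.factor {G : Type*} [Group G] [TopologicalSpace G]
    (S : ProfiniteCompositionSeries G) (i : ℕ) : Type _ :=
  letI := S.normal i
  ↥(S.H i) ⧸ (S.H (i + 1)).subgroupOf (S.H i)

noncomputable instance {G : Type*} [Group G] [TopologicalSpace G]
    (S : ProfiniteCompositionSeries G) (i : ℕ) : Group (S.factor i) :=
  letI := S.normal i
  inferInstanceAs (Group (↥(S.H i) ⧸ (S.H (i + 1)).subgroupOf (S.H i)))

/-- `A` is a composition factor of the profinite group `H`: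
it occurs among the quotients of some composition series of `H`. -/
def IsCompositionFactor (H : Type*) [Group H] [TopologicalSpace H]
    (A : Type*) [Group A] : Prop :=
  ∃ (S : ProfiniteCompositionSeries H) (i : ℕ),
    S.H (i + 1) < S.H i ∧ Nonempty (S.factor i ≃* A)

/-- `A` occurs with infinite multiplicity in some composition series of `H`. -/
def HasInfiniteMultiplicity (H : Type*) [Group H] [TopologicalSpace H]
    (A : Type*) [Group A] : Prop :=
  ∃ S : ProfiniteCompositionSeries H,
    {i : ℕ | S.H (i + 1) < S.H i ∧ Nonempty (S.factor i ≃* A)}.Infinite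

/-!
Call a continuous quotient `L → A` with `L` subnormal in a profinite group `X` a subnormal quotient
of `X`. The terms of a composition series of `X` are open, subnormal and eventually contained in
any given neighbourhood of `1`. Hence a factor occurring infinitely often gives subnormal quotients
with `L` arbitrarily small. Conversely, given `L → A` with `A` simple and `L ≤ H n`, the images of
`L ∩ H i` in `A` start at `A` and end at `1`, and the step `i ≥ n` at which they drop satisfies
`H i / H (i + 1) ≃ A`. So `A` has infinite multiplicity in one series, equivalently in every series,
if and only if `X` has arbitrarily small subnormal quotients isomorphic to `A`. This last condition
is the same for any two compact open subgroups, because they share an open subgroup that is normal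
in one of them. It also follows from (1), applied to arbitrarily small open normal subgroups.
-/

open Topology Filter Function

section SimpleQuotients

variable {X A B : Type*} [Group X] [Group A] [Group B]

lemma isSimpleGroup_quotient_iff_maximal (M : Subgroup X) [M.Normal] :
    IsSimpleGroup (X ⧸ M) ↔ Maximal (fun N : Subgroup X ↦ N.Normal ∧ N ≠ ⊤) M := by
  have hmk := QuotientGroup.mk'_surjective M
  refine ⟨fun hs ↦ ⟨⟨‹_›, QuotientGroup.nontrivial_iff.1 hs.toNontrivial⟩, ?_⟩, fun hM ↦ ?_⟩
  · rintro N ⟨hN, hNtop⟩ hMN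
    have hcomap : (N.map (QuotientGroup.mk' M)).comap (QuotientGroup.mk' M) = N :=
      Subgroup.comap_map_eq_self (by simpa using hMN)
    rcases (hN.map _ hmk).eq_bot_or_eq_top with h | h
    · simpa [h] using hcomap.ge
    · exact absurd (by simpa [h] using hcomap.symm) hNtop
  · have : Nontrivial (X ⧸ M) := QuotientGroup.nontrivial_iff.2 hM.prop.2
    refine ⟨fun Q hQ ↦ or_iff_not_imp_right.2 fun hQtop ↦ ?_⟩
    have hle : M ≤ Q.comap (QuotientGroup.mk' M) := by
      simpa using (QuotientGroup.mk' M).ker_le_comap Q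
    have hne : Q.comap (QuotientGroup.mk' M) ≠ ⊤ := fun h ↦
      hQtop (Subgroup.comap_injective hmk (h.trans (Subgroup.comap_top _).symm))
    rw [← Subgroup.map_comap_eq_self_of_surjective hmk Q,
      ← hM.eq_of_le ⟨hQ.comap _, hne⟩ hle, QuotientGroup.map_mk'_self]

lemma exists_normal_ge_isSimpleGroup_quotient (D : Subgroup X) [D.Normal] [D.FiniteIndex]
    (hD : D ≠ ⊤) : ∃ M : Subgroup X, ∃ _ : M.Normal, D ≤ M ∧ IsSimpleGroup (X ⧸ M) := by
  have : Finite ↑{M : Subgroup X | D ≤ M} :=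
    .of_equiv _ (QuotientGroup.comapMk'OrderIso D).toEquiv
  have hfin : {M : Subgroup X | D ≤ M ∧ M.Normal ∧ M ≠ ⊤}.Finite :=
    (Set.toFinite {M : Subgroup X | D ≤ M}).subset fun _ h ↦ h.1
  obtain ⟨M, hM⟩ := hfin.exists_maximal ⟨D, le_rfl, ‹_›, hD⟩
  have := hM.prop.2.1
  exact ⟨M, this, hM.prop.1, (isSimpleGroup_quotient_iff_maximal M).2
    ⟨hM.prop.2, fun N hN hMN ↦ hM.le_of_ge ⟨hM.prop.1.trans hMN, hN⟩ hMN⟩⟩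

lemma injective_of_surjective_of_isSimpleGroup [IsSimpleGroup B] [Nontrivial A] {f : B →* A}
    (hf : Surjective f) : Injective f := by
  refine f.ker_eq_bot_iff.1 (f.normal_ker.eq_bot_or_eq_top.resolve_right fun h ↦ ?_)
  obtain ⟨a, ha⟩ := exists_ne (1 : A)
  obtain ⟨b, rfl⟩ := hf a
  exact ha (f.mem_ker.1 (h ▸ Subgroup.mem_top b))

lemma nonempty_mulEquiv_of_ker_le_ker [IsSimpleGroup B] [Nontrivial A] {p : X →* A} {q : X →* B}
    (hp : Surjective p) (hq : Surjective q) (h : q.ker ≤ p.ker) : Nonempty (B ≃* A) := by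
  let g : B →* A := q.liftOfSurjective hq ⟨p, h⟩
  have hg : ⇑g ∘ q = p := funext fun x ↦ q.liftOfRightInverse_comp_apply _ _ ⟨p, h⟩ x
  have hgs : Surjective g := .of_comp (hg ▸ hp)
  exact ⟨.ofBijective g ⟨injective_of_surjective_of_isSimpleGroup hgs, hgs⟩⟩

lemma nonempty_quotient_mulEquiv_of_map_subgroupOf [Nontrivial A] {H H' L : Subgroup X}
    [(H'.subgroupOf H).Normal] [IsSimpleGroup (H ⧸ H'.subgroupOf H)] (hL : L.IsSubnormal)
    {f : L →* A} (hH : (H.subgroupOf L).map f = ⊤) (hH' : (H'.subgroupOf L).map f = ⊥) :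
    Nonempty ((H ⧸ H'.subgroupOf H) ≃* A) := by
  let p : ↥(L.subgroupOf H) →* A :=
    f.comp ((H.subtype.comp (L.subgroupOf H).subtype).codRestrict L fun x ↦ x.2)
  let q : ↥(L.subgroupOf H) →* H ⧸ H'.subgroupOf H :=
    (QuotientGroup.mk' _).comp (L.subgroupOf H).subtype
  have hp : Surjective p := fun a ↦ by
    obtain ⟨x, hx, rfl⟩ := hH.ge (Subgroup.mem_top a)
    exact ⟨⟨⟨x, hx⟩, x.2⟩, rfl⟩
  have hker : q.ker ≤ p.ker := fun x hx ↦ by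
    have hxH' : ((x : H) : X) ∈ H' := (QuotientGroup.eq_one_iff (x : H)).1 hx
    exact hH'.le ⟨⟨x, x.2⟩, hxH', rfl⟩
  have hq : Surjective q := by
    have hrange : q.range = (L.subgroupOf H).map (QuotientGroup.mk' _) := by
      rw [MonoidHom.range_comp, Subgroup.range_subtype]
    refine MonoidHom.range_eq_top.1 (Or.resolve_left (hrange ▸
      (hL.subgroupOf.quotient.eq_bot_or_top_of_isSimpleGroup inferInstance)) fun hbot ↦ ?_)
    have hp1 : p.ker = ⊤ :=
      top_le_iff.1 ((q.ker_eq_top_iff.2 (q.range_eq_bot_iff.1 hbot)).ge.trans hker)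
    obtain ⟨a, ha⟩ := exists_ne (1 : A)
    obtain ⟨x, rfl⟩ := hp a
    exact ha (p.mem_ker.1 (hp1 ▸ Subgroup.mem_top x))
  exact nonempty_mulEquiv_of_ker_le_ker hp hq hker

lemma isSubnormal_map_of_isSubnormal_range {φ : A →* X} (hφ : φ.range.IsSubnormal)
    {L : Subgroup A} (hL : L.IsSubnormal) : (L.map φ).IsSubnormal := by
  have := (hL.map φ.rangeRestrict_surjective).trans' hφ
  rwa [Subgroup.map_map, MonoidHom.subtype_comp_rangeRestrict] at this

lemma not_strictAnti_of_finiteIndex_le {D : Subgroup X} [D.FiniteIndex] {H : ℕ → Subgroup X}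
    (hD : ∀ i, D ≤ H i) : ¬ StrictAnti H := fun hH ↦ by
  have hindex : StrictMono fun i ↦ (H i).index := fun i j hij ↦
    have := Subgroup.finiteIndex_of_le (hD j)
    Subgroup.index_strictAnti (hH hij)
  have hlt : D.index < (H (D.index + 1)).index := hindex.le_apply (x := D.index + 1)
  exact hlt.not_ge (Subgroup.index_antitone (hD _))

end SimpleQuotients

section OpenSubgroups

variable {G : Type*} [Group G] [TopologicalSpace G]

lemma isOpenEmbedding_subgroup_inclusion {M U : Subgroup G} (h : M ≤ U)
    (hM : IsOpen (M : Set G)) : IsOpenEmbedding (Subgroup.inclusion h) :=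
  ⟨.inclusion h, by
    rw [← MonoidHom.coe_range, Subgroup.inclusion_range]
    exact hM.preimage continuous_subtype_val⟩

lemma isOpen_map_subtype {U : Subgroup G} (hU : IsOpen (U : Set G)) {H : Subgroup U}
    (hH : IsOpen (H : Set U)) : IsOpen (H.map U.subtype : Set G) :=
  hU.isOpenMap_subtype_val _ hH

lemma isCountablyGenerated_nhds_one_of_isOpen {U : Subgroup G} (V : Subgroup G)
    (hU : IsOpen (U : Set G)) [(𝓝 (1 : U)).IsCountablyGenerated] :
    (𝓝 (1 : V)).IsCountablyGenerated := by
  have : (𝓝 (1 : G)).IsCountablyGenerated := by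
    rw [← U.coe_one, ← hU.isOpenEmbedding_subtypeVal.map_nhds_eq]
    infer_instance
  rw [nhds_subtype_eq_comap, V.coe_one]
  infer_instance

variable [IsTopologicalGroup G]

open Pointwise in
lemma isOpen_stabilizer_of_isCompact {W : Set G} (hWc : IsCompact W) (hWo : IsOpen W) :
    IsOpen (MulAction.stabilizer G W : Set G) := by
  obtain ⟨T, hT, hTW⟩ := compact_open_separated_mul_left hWc hWo subset_rfl
  have hsub : ∀ t ∈ T, t • W ⊆ W := fun t ht ↦ (Set.smul_set_subset_mul ht).trans hTW
  refine Subgroup.isOpen_of_mem_nhds _ (g := 1) ?_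
  filter_upwards [hT, inv_mem_nhds_one G hT] with t ht ht'
  exact (hsub t ht).antisymm (Set.subset_smul_set_iff.2 (hsub _ ht'))

open Pointwise in
/-- Van Dantzig's theorem. -/
theorem exists_isCompact_isOpen_subgroup [TotallyDisconnectedSpace G] [LocallyCompactSpace G] :
    ∃ U : Subgroup G, IsCompact (U : Set G) ∧ IsOpen (U : Set G) := by
  obtain ⟨C, hC, hC1⟩ := exists_compact_mem_nhds (1 : G)
  obtain ⟨W, hW, h1W, hWC⟩ :=
    (loc_compact_Haus_tot_disc_of_zero_dim (H := G)).mem_nhds_iff.1 hC1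
  have hWc : IsCompact W := hC.of_isClosed_subset hW.isClosed hWC
  have hopen := isOpen_stabilizer_of_isCompact hWc hW.isOpen
  have hsub : (MulAction.stabilizer G W : Set G) ⊆ W := fun g (hg : g • W = W) ↦
    hg.subset ⟨1, h1W, mul_one g⟩
  exact ⟨_, hWc.of_isClosed_subset (Subgroup.isClosed_of_isOpen _ hopen) hsub, hopen⟩

lemma exists_isOpen_normal_subgroupOf_le [TotallyDisconnectedSpace G] {V W : Subgroup G}
    (hVc : IsCompact (V : Set G)) (hVo : IsOpen (V : Set G)) (hW : IsOpen (W : Set G)) :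
    ∃ M ≤ V, M ≤ W ∧ IsCompact (M : Set G) ∧ IsOpen (M : Set G) ∧ (M.subgroupOf V).Normal := by
  have : CompactSpace V := isCompact_iff_compactSpace.1 hVc
  obtain ⟨N, hN⟩ := ProfiniteGrp.exist_openNormalSubgroup_sub_open_nhds_of_one
    (hW.preimage (continuous_subtype_val (p := (· ∈ V)))) W.one_mem
  have hMV : N.toSubgroup.map V.subtype ≤ V := Subgroup.map_subtype_le _
  have hMo : IsOpen (N.toSubgroup.map V.subtype : Set G) := isOpen_map_subtype hVo N.isOpen'
  refine ⟨_, hMV, Subgroup.map_le_iff_le_comap.2 hN,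
    hVc.of_isClosed_subset (Subgroup.isClosed_of_isOpen _ hMo) hMV, hMo, ?_⟩
  rw [Subgroup.subgroupOf, Subgroup.comap_map_eq_self_of_injective V.subtype_injective]
  exact N.isNormal'

end OpenSubgroups

section ProfiniteGroups

variable {X : Type*} [Group X] [TopologicalSpace X] [IsTopologicalGroup X] [CompactSpace X]

lemma finiteIndex_of_isOpen {H : Subgroup X} (hH : IsOpen (H : Set X)) : H.FiniteIndex :=
  have := H.quotient_finite_of_isOpen hH
  Subgroup.finiteIndex_of_finite_quotient

lemma exists_simple_step {H N : Subgroup X} [N.Normal] (hH : IsOpen (H : Set X))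
    (hN : IsOpen (N : Set X)) (hHN : ¬ H ≤ N) :
    ∃ H' < H, IsOpen (H' : Set X) ∧ H ⊓ N ≤ H' ∧
      ∃ _ : (H'.subgroupOf H).Normal, IsSimpleGroup (H ⧸ H'.subgroupOf H) := by
  have := finiteIndex_of_isOpen hN
  obtain ⟨M, hM, hNM, hs⟩ := exists_normal_ge_isSimpleGroup_quotient (N.subgroupOf H)
    (mt Subgroup.subgroupOf_eq_top.1 hHN)
  have hle : H ⊓ N ≤ M.map H.subtype := fun x hx ↦ ⟨⟨x, hx.1⟩, hNM hx.2, rfl⟩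
  obtain ⟨H', hH', rfl⟩ : ∃ H' ≤ H, H'.subgroupOf H = M :=
    ⟨M.map H.subtype, Subgroup.map_subtype_le M,
      Subgroup.comap_map_eq_self_of_injective H.subtype_injective M⟩
  rw [Subgroup.map_subgroupOf_eq_of_le hH'] at hle
  refine ⟨H', hH'.lt_of_ne ?_, Subgroup.isOpen_mono hle (hH.inter hN), hle, hM, hs⟩
  rintro rfl
  exact ((isSimpleGroup_quotient_iff_maximal _).1 hs).prop.2 (Subgroup.subgroupOf_self _)

lemma exists_simple_step_of_antitone {N : ℕ → OpenNormalSubgroup X} (hN : Antitone N)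
    (hbot : ⨅ k, (N k).toSubgroup = ⊥) (H : OpenSubgroup X) :
    ∃ H' : OpenSubgroup X, H' ≤ H ∧ ∃ _ : (H'.subgroupOf (H : Subgroup X)).Normal,
      (H' < H ∧ IsSimpleGroup (H ⧸ H'.subgroupOf (H : Subgroup X)) ∨ (H : Subgroup X) = ⊥) ∧
      ∀ k, ¬ (H : Subgroup X) ≤ (N k).toSubgroup →
        H' < H ∧ (H : Subgroup X) ⊓ (N k).toSubgroup ≤ H' := by
  classical
  by_cases hHbot : (H : Subgroup X) = ⊥
  · exact ⟨H, le_rfl, by rw [Subgroup.subgroupOf_self]; infer_instance, .inr hHbot,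
      fun k hk ↦ absurd (hHbot.le.trans bot_le) hk⟩
  have hex : ∃ k, ¬ (H : Subgroup X) ≤ (N k).toSubgroup := by
    by_contra! h
    exact hHbot (le_bot_iff.1 (hbot ▸ le_iInf h))
  have := (N (Nat.find hex)).isNormal'
  obtain ⟨H', hlt, hopen, hle, hn, hs⟩ :=
    exists_simple_step H.isOpen (N (Nat.find hex)).isOpen' (Nat.find_spec hex)
  refine ⟨⟨H', hopen⟩, hlt.le, hn, .inl ⟨hlt, hs⟩, fun k hk ↦ ⟨hlt, ?_⟩⟩
  have hNk : (N k).toSubgroup ≤ (N (Nat.find hex)).toSubgroup := hN (Nat.find_min' hex hk)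
  exact (inf_le_inf_left _ hNk).trans hle

lemma exists_le_of_forall_inf_le {N : Subgroup X} (hN : IsOpen (N : Set X)) {H : ℕ → Subgroup X}
    (htop : H 0 = ⊤) (hstep : ∀ i, ¬ H i ≤ N → H (i + 1) < H i ∧ H i ⊓ N ≤ H (i + 1)) :
    ∃ i, H i ≤ N := by
  by_contra! hnot
  -- All `H i` then contain `N`, so they cannot decrease strictly for ever.
  have := finiteIndex_of_isOpen hN
  have hNH : ∀ i, N ≤ H i := fun i ↦ by
    induction i with
    | zero => exact htop ▸ le_top
    | succ i ih => exact (le_inf ih le_rfl).trans (hstep i (hnot i)).2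
  exact not_strictAnti_of_finiteIndex_le hNH (strictAnti_nat_of_succ_lt fun i ↦
    (hstep i (hnot i)).1)

variable [TotallyDisconnectedSpace X]

lemma isOpen_of_isClosed_of_isSimpleGroup_quotient {K : Subgroup X} [K.Normal]
    (hK : IsClosed (K : Set X)) [hs : IsSimpleGroup (X ⧸ K)] : IsOpen (K : Set X) := by
  have hmax := (isSimpleGroup_quotient_iff_maximal K).1 hs
  obtain ⟨U, hUo, hKU, hU⟩ : ∃ U : Subgroup X, IsOpen (U : Set X) ∧ K ≤ U ∧ U ≠ ⊤ := by
    by_contra! h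
    refine hmax.prop.2 ((ProfiniteGrp.closedSubgroup_eq_sInf_open ⟨K, hK⟩).trans ?_)
    exact sInf_eq_top.2 fun U hU ↦ h U hU.1 hU.2
  have := finiteIndex_of_isOpen hUo
  have hcore : K = U.normalCore := hmax.eq_of_le
    ⟨inferInstance, fun h ↦ hU (top_le_iff.1 (h.ge.trans U.normalCore_le))⟩
    (Subgroup.normal_le_normalCore.2 hKU)
  rw [hcore]
  exact Subgroup.isOpen_of_isClosed_of_finiteIndex _
    (U.normalCore_isClosed (Subgroup.isClosed_of_isOpen U hUo))

lemma hasBasis_nhds_one_openNormalSubgroup :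
    (𝓝 (1 : X)).HasBasis (fun _ : OpenNormalSubgroup X ↦ True) fun N ↦ (N : Set X) := by
  refine ⟨fun s ↦ ⟨fun hs ↦ ?_, fun ⟨N, _, hN⟩ ↦ mem_of_superset N.mem_nhds_one hN⟩⟩
  obtain ⟨O, hOs, hO, h1O⟩ := mem_nhds_iff.1 hs
  obtain ⟨N, hN⟩ := ProfiniteGrp.exist_openNormalSubgroup_sub_open_nhds_of_one hO h1O
  exact ⟨N, trivial, hN.trans hOs⟩

lemma exists_antitone_openNormalSubgroup_iInf_eq_bot [(𝓝 (1 : X)).IsCountablyGenerated] :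
    ∃ N : ℕ → OpenNormalSubgroup X, Antitone N ∧ ⨅ k, (N k).toSubgroup = ⊥ := by
  obtain ⟨N, -, hN⟩ :=
    (hasBasis_nhds_one_openNormalSubgroup (X := X)).exists_antitone_subbasis
  refine ⟨N, hN.antitone, SetLike.coe_injective ?_⟩
  simpa using! biInter_basis_nhds hN.toHasBasis

theorem nonempty_profiniteCompositionSeries [(𝓝 (1 : X)).IsCountablyGenerated] :
    Nonempty (ProfiniteCompositionSeries X) := by
  obtain ⟨N, hN, hbot⟩ := exists_antitone_openNormalSubgroup_iInf_eq_bot (X := X)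
  choose next hle hnormal hstep hconv using exists_simple_step_of_antitone hN hbot
  let H : ℕ → OpenSubgroup X := Nat.rec ⊤ fun _ ↦ next
  have hH : ⨅ i, (H i).toSubgroup = ⊥ := by
    refine le_bot_iff.1 (hbot ▸ le_iInf fun k ↦ ?_)
    obtain ⟨i, hi⟩ := exists_le_of_forall_inf_le (N k).isOpen' (H := fun i ↦ (H i).toSubgroup)
      rfl fun i hi ↦ hconv (H i) k hi
    exact (iInf_le _ i).trans hi
  exact ⟨{
    H := fun i ↦ (H i).toSubgroup
    top_eq := rfl
    isClosed := fun i ↦ (H i).isClosed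
    antitone := fun i ↦ hle (H i)
    iInf_eq_bot := hH
    normal := fun i ↦ hnormal (H i)
    step := fun i ↦ hstep (H i) }⟩

end ProfiniteGroups

section SubnormalQuotients

/-- `A` is the quotient, by a relatively open kernel, of a subnormal subgroup of `X` contained
in `W`. -/
def HasSubnormalQuotientBelow {X : Type*} [Group X] [TopologicalSpace X] (W : Subgroup X)
    (A : Type*) [Group A] : Prop :=
  ∃ L ≤ W, L.IsSubnormal ∧ ∃ f : L →* A, Surjective f ∧ IsOpen (f.ker : Set L)

/-- `A` is an open quotient of subnormal subgroups of `X` contained in arbitrarily small open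
subgroups. For profinite `X` this is the form of infinite multiplicity that does not refer to a
composition series. -/
def HasSmallSubnormalQuotients (X : Type*) [Group X] [TopologicalSpace X] (A : Type*) [Group A] :
    Prop :=
  ∀ W : Subgroup X, IsOpen (W : Set X) → HasSubnormalQuotientBelow W A

variable {X Y A : Type*} [Group X] [TopologicalSpace X] [Group Y] [TopologicalSpace Y] [Group A]

lemma HasSubnormalQuotientBelow.mono {W W' : Subgroup X} (h : HasSubnormalQuotientBelow W A)
    (hW : W ≤ W') : HasSubnormalQuotientBelow W' A :=
  let ⟨L, hL, hf⟩ := h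
  ⟨L, hL.trans hW, hf⟩

lemma HasSubnormalQuotientBelow.comap {φ : Y →* X} (hφ : Continuous φ) {W : Subgroup X}
    (hW : W ≤ φ.range) (h : HasSubnormalQuotientBelow W A) :
    HasSubnormalQuotientBelow (W.comap φ) A := by
  obtain ⟨L, hLW, hL, f, hf, hker⟩ := h
  have hcont : Continuous (φ.subgroupComap L) :=
    (hφ.comp continuous_subtype_val).subtype_mk _
  have hsurj : Surjective (φ.subgroupComap L) := fun x ↦ by
    obtain ⟨y, hy⟩ := hW (hLW x.2)
    exact ⟨⟨y, Subgroup.mem_comap.2 (hy ▸ x.2)⟩, Subtype.ext hy⟩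
  exact ⟨L.comap φ, Subgroup.comap_mono hLW, hL.comap φ, f.comp (φ.subgroupComap L),
    hf.comp hsurj, hker.preimage hcont⟩

lemma HasSubnormalQuotientBelow.map {φ : Y →* X} (hφ : IsEmbedding φ)
    (hrange : φ.range.IsSubnormal) {W : Subgroup Y} (h : HasSubnormalQuotientBelow W A) :
    HasSubnormalQuotientBelow (W.map φ) A := by
  obtain ⟨L, hLW, hL, f, hf, hker⟩ := h
  let e : L ≃* L.map φ := L.equivMapOfInjective φ hφ.injective
  have hcomp : (φ ∘ Subtype.val) ∘ e.symm = Subtype.val := funext fun x ↦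
    congrArg Subtype.val (e.apply_symm_apply x)
  have hcont : Continuous e.symm :=
    (hφ.comp .subtypeVal).continuous_iff.2 (hcomp ▸ continuous_subtype_val)
  exact ⟨L.map φ, Subgroup.map_mono hLW, isSubnormal_map_of_isSubnormal_range hrange hL,
    f.comp e.symm.toMonoidHom, hf.comp e.symm.surjective, hker.preimage hcont⟩

lemma HasSmallSubnormalQuotients.comap {φ : Y →* X} (hφ : IsOpenEmbedding φ)
    (h : HasSmallSubnormalQuotients X A) : HasSmallSubnormalQuotients Y A := fun W hW ↦ by
  have := (h (W.map φ) (hφ.isOpenMap _ hW)).comap hφ.continuous (Subgroup.map_le_range φ W)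
  rwa [Subgroup.comap_map_eq_self_of_injective hφ.injective] at this

lemma HasSmallSubnormalQuotients.map {φ : Y →* X} (hφ : IsEmbedding φ)
    (hrange : φ.range.IsSubnormal) (h : HasSmallSubnormalQuotients Y A) :
    HasSmallSubnormalQuotients X A := fun W hW ↦
  ((h (W.comap φ) (hW.preimage hφ.continuous)).map hφ hrange).mono (Subgroup.map_comap_le φ W)

end SubnormalQuotients

namespace ProfiniteCompositionSeries

variable {X A : Type*} [Group X] [TopologicalSpace X] [Group A]

/-- The set of indices at which `A` occurs as a factor of `S`. A finite series is padded by trivial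
subgroups, and the strict inclusion excludes the padding. -/
def occurrences (S : ProfiniteCompositionSeries X) (A : Type*) [Group A] : Set ℕ :=
  {i | S.H (i + 1) < S.H i ∧ Nonempty (S.factor i ≃* A)}

variable (S : ProfiniteCompositionSeries X)

lemma antitone_H : Antitone S.H := antitone_nat_of_succ_le S.antitone

lemma isSubnormal (i : ℕ) : (S.H i).IsSubnormal := by
  induction i with
  | zero => exact S.top_eq ▸ .top
  | succ i ih => exact .step _ _ (S.antitone i) ih (S.normal i)

lemma normal_map_subgroupOf_succ {L : Subgroup X} {f : L →* A} {i : ℕ}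
    (htop : ((S.H i).subgroupOf L).map f = ⊤) : (((S.H (i + 1)).subgroupOf L).map f).Normal := by
  refine ⟨?_⟩
  rintro _ ⟨l, hl, rfl⟩ a
  obtain ⟨m, hm, rfl⟩ := htop.ge (Subgroup.mem_top a)
  exact ⟨m * l * m⁻¹, (S.normal i).conj_mem ⟨l, S.antitone i hl⟩ hl ⟨m, hm⟩, by simp⟩

lemma mem_occurrences_of_map_subgroupOf [IsSimpleGroup A] {L : Subgroup X} (hL : L.IsSubnormal)
    {f : L →* A} {i : ℕ} (htop : ((S.H i).subgroupOf L).map f = ⊤)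
    (hne : ((S.H (i + 1)).subgroupOf L).map f ≠ ⊤) : i ∈ S.occurrences A := by
  have := S.normal i
  have hbot := (S.normal_map_subgroupOf_succ htop).eq_bot_or_eq_top.resolve_right hne
  rcases S.step i with ⟨hlt, hs⟩ | hHi
  · exact ⟨hlt, nonempty_quotient_mulEquiv_of_map_subgroupOf hL htop hbot⟩
  · have hsucc : S.H (i + 1) = S.H i := (S.antitone i).antisymm (hHi ▸ bot_le)
    exact absurd (hsucc ▸ htop) hne

variable [CompactSpace X]

lemma exists_coe_subset_of_mem_nhds_one {s : Set X} (hs : s ∈ 𝓝 1) :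
    ∃ n, (S.H n : Set X) ⊆ s := by
  refine exists_subset_nhds_of_isCompact' (V := fun i ↦ (S.H i : Set X))
    (directed_of_isDirected_le S.antitone_H) (fun i ↦ (S.isClosed i).isCompact) S.isClosed
    fun x hx ↦ ?_
  have hx1 : x ∈ ⨅ i, S.H i := Subgroup.mem_iInf.2 (Set.mem_iInter.1 hx)
  rw [S.iInf_eq_bot, Subgroup.mem_bot] at hx1
  rwa [hx1]

lemma exists_map_subgroupOf_eq_bot {L : Subgroup X} {f : L →* A} (hf : IsOpen (f.ker : Set L)) :
    ∃ n, ((S.H n).subgroupOf L).map f = ⊥ := by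
  obtain ⟨s, hs, hsker⟩ := (mem_nhds_subtype _ _ _).1 (hf.mem_nhds f.ker.one_mem)
  obtain ⟨n, hn⟩ := S.exists_coe_subset_of_mem_nhds_one hs
  exact ⟨n, (Subgroup.map_eq_bot_iff _).2 fun x hx ↦ hsker (hn hx)⟩

theorem exists_mem_occurrences [IsSimpleGroup A] {n : ℕ}
    (h : HasSubnormalQuotientBelow (S.H n) A) : ∃ i ≥ n, i ∈ S.occurrences A := by
  obtain ⟨L, hLn, hL, f, hf, hker⟩ := h
  obtain ⟨m, hm⟩ := S.exists_map_subgroupOf_eq_bot hker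
  by_contra! hnot
  have htop : ∀ i ≥ n, ((S.H i).subgroupOf L).map f = ⊤ := fun i hi ↦ by
    induction i, hi using Nat.le_induction with
    | base =>
      rw [Subgroup.subgroupOf_eq_top.2 hLn, Subgroup.map_top_of_surjective f hf]
    | succ i hi ih =>
      exact of_not_not fun hne ↦ hnot i hi (S.mem_occurrences_of_map_subgroupOf hL ih hne)
  have hbot : ((S.H (max n m)).subgroupOf L).map f = ⊥ := le_bot_iff.1 <| hm ▸
    Subgroup.map_mono (Subgroup.comap_mono (S.antitone_H (le_max_right n m)))
  exact bot_ne_top (hbot.symm.trans (htop _ (le_max_left n m)))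

variable [IsTopologicalGroup X] [TotallyDisconnectedSpace X]

lemma isOpen (i : ℕ) : IsOpen (S.H i : Set X) := by
  induction i with
  | zero => simp [S.top_eq]
  | succ i ih =>
    rcases S.step i with ⟨-, hs⟩ | hHi
    · have := S.normal i
      have : CompactSpace (S.H i) := isCompact_iff_compactSpace.1 (S.isClosed i).isCompact
      have hrel : IsOpen ((S.H (i + 1)).subgroupOf (S.H i) : Set (S.H i)) :=
        isOpen_of_isClosed_of_isSimpleGroup_quotient
          ((S.isClosed (i + 1)).preimage continuous_subtype_val)
      simpa [Subgroup.map_subgroupOf_eq_of_le (S.antitone i)] using isOpen_map_subtype ih hrel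
    · rwa [(S.antitone i).antisymm (hHi ▸ bot_le)]

lemma isCountablyGenerated_nhds_one (S : ProfiniteCompositionSeries X) :
    (𝓝 (1 : X)).IsCountablyGenerated :=
  HasBasis.isCountablyGenerated (p := fun _ : ℕ ↦ True) (s := fun i ↦ (S.H i : Set X))
    ⟨fun _ ↦ ⟨fun hs ↦ by simpa using S.exists_coe_subset_of_mem_nhds_one hs, fun ⟨i, _, hi⟩ ↦
      mem_of_superset ((S.isOpen i).mem_nhds (S.H i).one_mem) hi⟩⟩

lemma hasSubnormalQuotientBelow {i : ℕ} (h : i ∈ S.occurrences A) :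
    HasSubnormalQuotientBelow (S.H i) A := by
  obtain ⟨-, ⟨e⟩⟩ := h
  have := S.normal i
  let π : S.H i →* S.factor i := QuotientGroup.mk' ((S.H (i + 1)).subgroupOf (S.H i))
  have hker : ((e : S.factor i →* A).comp π).ker = (S.H (i + 1)).subgroupOf (S.H i) := by
    rw [MonoidHom.ker_mulEquiv_comp]
    exact QuotientGroup.ker_mk' _
  refine ⟨S.H i, le_rfl, S.isSubnormal i, (e : S.factor i →* A).comp π,
    e.surjective.comp (QuotientGroup.mk'_surjective _), ?_⟩
  rw [hker]
  exact (S.isOpen (i + 1)).preimage continuous_subtype_val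

theorem infinite_occurrences_iff [IsSimpleGroup A] :
    (S.occurrences A).Infinite ↔ HasSmallSubnormalQuotients X A := by
  refine ⟨fun hS W hW ↦ ?_, fun h ↦ Set.infinite_of_forall_exists_gt fun n ↦ ?_⟩
  · obtain ⟨n, hn⟩ := S.exists_coe_subset_of_mem_nhds_one (hW.mem_nhds W.one_mem)
    obtain ⟨i, hi, hni⟩ := hS.exists_gt n
    exact (S.hasSubnormalQuotientBelow hi).mono ((S.antitone_H hni.le).trans hn)
  · obtain ⟨i, hni, hi⟩ := S.exists_mem_occurrences (h _ (S.isOpen (n + 1)))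
    exact ⟨i, hi, hni⟩

end ProfiniteCompositionSeries

section CompactOpenSubgroups

variable {G A : Type*} [Group G] [TopologicalSpace G] [IsTopologicalGroup G]
  [TotallyDisconnectedSpace G] [Group A] {U V : Subgroup G}

lemma HasSmallSubnormalQuotients.of_isOpen (hU : IsOpen (U : Set G)) (hVc : IsCompact (V : Set G))
    (hVo : IsOpen (V : Set G)) (h : HasSmallSubnormalQuotients U A) :
    HasSmallSubnormalQuotients V A := by
  obtain ⟨M, hMV, hMU, -, hMo, hM⟩ := exists_isOpen_normal_subgroupOf_le hVc hVo hU
  refine (h.comap (isOpenEmbedding_subgroup_inclusion hMU hMo)).map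
    (isOpenEmbedding_subgroup_inclusion hMV hMo).isEmbedding ?_
  rw [Subgroup.inclusion_range]
  exact hM.isSubnormal

lemma hasSmallSubnormalQuotients_of_forall_isCompositionFactor (hUc : IsCompact (U : Set G))
    (hUo : IsOpen (U : Set G)) (h : ∀ V : Subgroup G, IsCompact (V : Set G) →
      IsOpen (V : Set G) → IsCompositionFactor V A) : HasSmallSubnormalQuotients U A := by
  intro W hW
  obtain ⟨M, hMU, hMW, hMc, hMo, hM⟩ :=
    exists_isOpen_normal_subgroupOf_le hUc hUo (isOpen_map_subtype hUo hW)
  have : CompactSpace M := isCompact_iff_compactSpace.1 hMc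
  obtain ⟨S, i, hi⟩ := h M hMc hMo
  have hrange : (Subgroup.inclusion hMU).range = M.subgroupOf U := Subgroup.inclusion_range hMU
  refine ((S.hasSubnormalQuotientBelow hi).map (.inclusion hMU)
    (hrange ▸ hM.isSubnormal)).mono ((Subgroup.map_le_range _ _).trans (hrange.le.trans ?_))
  rw [← Subgroup.comap_map_eq_self_of_injective U.subtype_injective W]
  exact Subgroup.comap_mono hMW

theorem HasInfiniteMultiplicity.of_isOpen [IsSimpleGroup A] (hUc : IsCompact (U : Set G))
    (hUo : IsOpen (U : Set G)) (hVc : IsCompact (V : Set G)) (hVo : IsOpen (V : Set G))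
    (h : HasInfiniteMultiplicity U A) : HasInfiniteMultiplicity V A := by
  have : CompactSpace U := isCompact_iff_compactSpace.1 hUc
  have : CompactSpace V := isCompact_iff_compactSpace.1 hVc
  obtain ⟨S, hS⟩ := h
  have := S.isCountablyGenerated_nhds_one
  have := isCountablyGenerated_nhds_one_of_isOpen V hUo
  obtain ⟨T⟩ := nonempty_profiniteCompositionSeries (X := V)
  exact ⟨T, T.infinite_occurrences_iff.2
    ((S.infinite_occurrences_iff.1 hS).of_isOpen hUo hVc hVo)⟩

end CompactOpenSubgroups

theorem local_simple_content_equivalences_general (G : Type*) [Group G] [TopologicalSpace G]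
    [IsTopologicalGroup G] [TotallyDisconnectedSpace G] [LocallyCompactSpace G]
    (A : Type*) [Group A] [IsSimpleGroup A] :
    List.TFAE [
      ∀ U : Subgroup G, IsCompact (U : Set G) → IsOpen (U : Set G) → IsCompositionFactor U A,
      ∃ U : Subgroup G, IsCompact (U : Set G) ∧ IsOpen (U : Set G) ∧ HasInfiniteMultiplicity U A,
      ∀ U : Subgroup G, IsCompact (U : Set G) → IsOpen (U : Set G) →
        HasInfiniteMultiplicity U A] := by
  tfae_have 1 → 2 := fun h ↦ by
    obtain ⟨U, hUc, hUo⟩ := exists_isCompact_isOpen_subgroup (G := G)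
    have : CompactSpace U := isCompact_iff_compactSpace.1 hUc
    obtain ⟨S, -⟩ := h U hUc hUo
    exact ⟨U, hUc, hUo, S, S.infinite_occurrences_iff.2
      (hasSmallSubnormalQuotients_of_forall_isCompositionFactor hUc hUo h)⟩
  tfae_have 2 → 3 := fun ⟨_, hUc, hUo, hU⟩ _ hVc hVo ↦ hU.of_isOpen hUc hUo hVc hVo
  tfae_have 3 → 1 := fun h U hUc hUo ↦
    let ⟨S, hS⟩ := h U hUc hUo
    ⟨S, hS.nonempty⟩
  tfae_finish

/-- Let `G` be a non-discrete second countable t.d.l.c. group and `A` a finite simple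
group.  Then the following are equivalent: (1) `A` is a composition factor of every
compact open subgroup of `G`; (2) some compact open subgroup has a composition series in
which `A` appears infinitely often; (3) every compact open subgroup has a composition
series in which `A` appears infinitely often. -/
theorem local_simple_content_equivalences (G : Type*) [Group G] [TopologicalSpace G]
    [IsTopologicalGroup G] [T2Space G] [TotallyDisconnectedSpace G] [LocallyCompactSpace G]
    [SecondCountableTopology G] (hnd : ¬ DiscreteTopology G)
    (A : Type*) [Group A] [Finite A] [IsSimpleGroup A] :
    ((∀ U : Subgroup G, IsCompact (U : Set G) → IsOpen (U : Set G) →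
        IsCompositionFactor ↥U A) ↔
      (∃ U : Subgroup G, IsCompact (U : Set G) ∧ IsOpen (U : Set G) ∧
        HasInfiniteMultiplicity ↥U A)) ∧
    ((∃ U : Subgroup G, IsCompact (U : Set G) ∧ IsOpen (U : Set G) ∧
        HasInfiniteMultiplicity ↥U A) ↔
      (∀ U : Subgroup G, IsCompact (U : Set G) → IsOpen (U : Set G) →
        HasInfiniteMultiplicity ↥U A)) := by
  have h := local_simple_content_equivalences_general G A
  exact ⟨h.out 0 1, h.out 1 2⟩
end

section
/- Let G be a second countable t.d.l.c. group acting faithfully, vertex-transitively and with compact open vertex stabilizers on a connected, locally finite simple graph Γ of degree d (so Γ is a Cayley–Abels graph for G and the action has trivial kernel). Fix a vertex α and let L be the local action of G on Γ, i.e., the image of the stabilizer G_α in the symmetric group on the d neighbours of α. If a finite simple group A is a composition factor of every compact open subgroup of G, then there exist a neighbour β of α and subgroups N ⊴ H ≤ L_β (where L_β is the stabilizer of β in L) with H/N ≅ A; in particular, A is isomorphic to a subquotient of the symmetric group on d − 1 letters. -/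
/-- A Cayley–Abels graph for a topological group `G`. -/
def IsCayleyAbels {G V : Type*} [Group G] [TopologicalSpace G]
    (Γ : SimpleGraph V) (ρ : G →* Equiv.Perm V) : Prop :=
  Γ.Connected ∧ (∀ v : V, (Γ.neighborSet v).Finite) ∧
    (∀ (g : G) (u v : V), Γ.Adj u v → Γ.Adj (ρ g u) (ρ g v)) ∧
    (∀ u v : V, ∃ g : G, ρ g u = v) ∧
    (∀ v : V, IsCompact {g : G | ρ g v = v} ∧ IsOpen {g : G | ρ g v = v})

/-- The permutation of the neighbours of `α` induced by an element `g` fixing `α`. -/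
def localPerm {G V : Type*} [Group G] (Γ : SimpleGraph V) (ρ : G →* Equiv.Perm V)
    (hpres : ∀ (g : G) (u v : V), Γ.Adj u v → Γ.Adj (ρ g u) (ρ g v))
    (α : V) (g : G) (hg : ρ g α = α) : Equiv.Perm (Γ.neighborSet α) :=
  (ρ g).subtypePerm (fun v => by
    symm
    constructor
    · intro hv
      have h := hpres g α v hv
      rwa [hg] at h
    · intro hv
      have h := hpres g⁻¹ α (ρ g v) hv
      rw [map_inv] at h
      have hα : (ρ g)⁻¹ α = α := by
        conv_lhs => rw [← hg]
        exact Equiv.symm_apply_apply _ _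
      rwa [hα, show (ρ g)⁻¹ (ρ g v) = v from Equiv.symm_apply_apply _ _] at h)

/-- The local action of `G` at the vertex `α`: the subgroup of the symmetric group on the
neighbours of `α` induced by the stabilizer of `α`. -/
def localAction {G V : Type*} [Group G] (Γ : SimpleGraph V) (ρ : G →* Equiv.Perm V)
    (hpres : ∀ (g : G) (u v : V), Γ.Adj u v → Γ.Adj (ρ g u) (ρ g v))
    (α : V) : Subgroup (Equiv.Perm (Γ.neighborSet α)) where
  carrier := {σ | ∃ (g : G) (hg : ρ g α = α), σ = localPerm Γ ρ hpres α g hg}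
  one_mem' := by
    refine ⟨1, by simp, ?_⟩
    ext x
    simp [localPerm]
  mul_mem' := by
    rintro σ τ ⟨g, hg, rfl⟩ ⟨h, hh, rfl⟩
    refine ⟨g * h, by simp [hg, hh], ?_⟩
    ext x
    simp [localPerm]
    rfl
  inv_mem' := by
    rintro σ ⟨g, hg, rfl⟩
    have hginv : ρ g⁻¹ α = α := by
      rw [map_inv]
      conv_lhs => rw [← hg]
      exact Equiv.symm_apply_apply _ _
    refine ⟨g⁻¹, hginv, ?_⟩
    ext x
    simp [localPerm, map_inv]

/-!
Let `U` be the pointwise stabilizer of the closed ball of radius `1` around `α`, and let `P ≤ U` be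
the term of a composition series of `U` that maps onto `A`. Suppose that a subgroup `Q ≤ P` fixing
an edge `vw` maps onto `A`. As `A` is simple, it is a quotient either of the group that `Q` induces
on the neighbours of `v`, which is contained in the stabilizer of `w` in the local action at `v`, or
of the subgroup of `Q` fixing all neighbours of `v`. If the first case never occurs, then walking
along paths from `α` shows that the subgroup of `P` fixing any given finite set of vertices still
maps onto `A`. By compactness and faithfulness this forces `A` to be trivial.
-/

section Subquotient

variable {E E' Q A : Type*} [Group E] [Group E'] [Group Q] [Group A]

/-- `A` is a subquotient of the subgroup `K` of `E`. The kernel of the surjection `f` plays the role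
of the normal subgroup. -/
def IsSubquotient (A : Type*) [Group A] (K : Subgroup E) : Prop :=
  ∃ H ≤ K, ∃ f : H →* A, Function.Surjective f

namespace IsSubquotient

theorem of_ker_le_ker {K : Subgroup E} (φ : Q →* E) (f : Q →* A) (hf : Function.Surjective f)
    (hker : φ.ker ≤ f.ker) (hrange : φ.range ≤ K) : IsSubquotient A K := by
  let f' : φ.range →* A := φ.rangeRestrict.liftOfSurjective φ.rangeRestrict_surjective
    ⟨f, φ.ker_rangeRestrict.trans_le hker⟩
  have hf' (q : Q) : f' (φ.rangeRestrict q) = f q :=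
    φ.rangeRestrict.liftOfRightInverse_comp_apply _ _ _ q
  refine ⟨φ.range, hrange, f', fun a => ?_⟩
  obtain ⟨q, rfl⟩ := hf a
  exact ⟨_, hf' q⟩

theorem of_injective {K : Subgroup E} {K' : Subgroup E'} (h : IsSubquotient A K)
    (φ : K →* E') (hφ : Function.Injective φ) (hrange : φ.range ≤ K') : IsSubquotient A K' := by
  obtain ⟨H, hHK, f, hf⟩ := h
  have hinj : Function.Injective (φ.comp (Subgroup.inclusion hHK)) :=
    hφ.comp (Subgroup.inclusion_injective hHK)
  refine of_ker_le_ker (φ.comp (Subgroup.inclusion hHK)) f hf ?_ ?_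
  · rw [(MonoidHom.ker_eq_bot_iff _).2 hinj]
    exact bot_le
  · rintro _ ⟨x, rfl⟩
    exact hrange ⟨_, rfl⟩

theorem mono {K K' : Subgroup E} (h : IsSubquotient A K) (hK : K ≤ K') : IsSubquotient A K' :=
  let ⟨H, hH, f, hf⟩ := h
  ⟨H, hH.trans hK, f, hf⟩

theorem exists_quotient_mulEquiv {K : Subgroup E} (h : IsSubquotient A K) :
    ∃ (H N : Subgroup E) (_ : N ≤ H) (hn : (N.subgroupOf H).Normal),
      H ≤ K ∧ Nonempty (letI := hn; (↥H ⧸ N.subgroupOf H) ≃* A) := by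
  obtain ⟨H, hHK, f, hf⟩ := h
  have hN : (f.ker.map H.subtype).subgroupOf H = f.ker :=
    Subgroup.comap_map_eq_self_of_injective H.subtype_injective _
  have hn : ((f.ker.map H.subtype).subgroupOf H).Normal := by
    rw [hN]
    exact f.normal_ker
  exact ⟨H, f.ker.map H.subtype, Subgroup.map_subtype_le _, hn, hHK,
    ⟨(QuotientGroup.quotientMulEquivOfEq hN).trans
      (QuotientGroup.quotientKerEquivOfSurjective f hf)⟩⟩

end IsSubquotient

theorem isSubquotient_or_map_ker_eq_top [IsSimpleGroup A] {K : Subgroup E} (φ : Q →* E)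
    (f : Q →* A) (hf : Function.Surjective f) (hrange : φ.range ≤ K) :
    IsSubquotient A K ∨ φ.ker.map f = ⊤ :=
  (φ.normal_ker.map f hf).eq_bot_or_eq_top.imp_left fun hbot =>
    .of_ker_le_ker φ f hf ((Subgroup.map_eq_bot_iff _).1 hbot) hrange

theorem IsSubquotient.perm_fin_of_le_stabilizer {X : Type*} [Finite X] {b : X}
    {K : Subgroup (Equiv.Perm X)} (h : IsSubquotient A K)
    (hK : K ≤ MulAction.stabilizer (Equiv.Perm X) b) :
    IsSubquotient A (⊤ : Subgroup (Equiv.Perm (Fin (Nat.card X - 1)))) := by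
  let e : SubMulAction.ofStabilizer (Equiv.Perm X) b ≃ Fin (Nat.card X - 1) :=
    Finite.equivFinOfCardEq (SubMulAction.nat_card_ofStabilizer_eq _ b)
  let restrict := MulAction.toPermHom (MulAction.stabilizer (Equiv.Perm X) b)
    (SubMulAction.ofStabilizer (Equiv.Perm X) b)
  have hrestrict : Function.Injective restrict := by
    refine (injective_iff_map_eq_one restrict).2 fun σ hσ => Subtype.ext (Equiv.ext fun x => ?_)
    by_cases hx : x = b
    · exact hx ▸ σ.2
    · exact congrArg Subtype.val (Equiv.congr_fun hσ ⟨x, hx⟩)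
  exact (h.mono hK).of_injective (e.permCongrHom.toMonoidHom.comp restrict)
    (e.permCongrHom.injective.comp hrestrict) le_top

end Subquotient

theorem IsCompositionFactor.exists_isClosed_surjective {H A : Type*} [Group H] [TopologicalSpace H]
    [Group A] (h : IsCompositionFactor H A) :
    ∃ (P : Subgroup H) (f : P →* A),
      IsClosed (P : Set H) ∧ Function.Surjective f ∧ IsClosed (f.ker : Set P) := by
  obtain ⟨S, i, -, ⟨e⟩⟩ := h
  have := S.normal i
  let π : S.H i →* S.factor i := QuotientGroup.mk' ((S.H (i + 1)).subgroupOf (S.H i))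
  have hker : (e.toMonoidHom.comp π).ker = (S.H (i + 1)).subgroupOf (S.H i) :=
    (MonoidHom.ker_mulEquiv_comp π e).trans (QuotientGroup.ker_mk' _)
  refine ⟨S.H i, e.toMonoidHom.comp π, S.isClosed i,
    e.surjective.comp (QuotientGroup.mk'_surjective _), ?_⟩
  rw [hker]
  exact (S.isClosed (i + 1)).preimage continuous_subtype_val

section PointwiseStabilizer

variable {P V : Type*} [Group P]

/-- The subgroup of elements of `P` that fix every point of `s`, where `P` acts on `V` through `σ`;
this is `fixingSubgroup` for actions given by homomorphisms into `Equiv.Perm V`. -/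
def pointwiseStabilizer (σ : P →* Equiv.Perm V) (s : Set V) : Subgroup P :=
  (fixingSubgroup (Equiv.Perm V) s).comap σ

theorem mem_pointwiseStabilizer {σ : P →* Equiv.Perm V} {s : Set V} {p : P} :
    p ∈ pointwiseStabilizer σ s ↔ ∀ v ∈ s, σ p v = v :=
  mem_fixingSubgroup_iff _

theorem coe_pointwiseStabilizer (σ : P →* Equiv.Perm V) (s : Set V) :
    (pointwiseStabilizer σ s : Set P) = ⋂ v ∈ s, {p | σ p v = v} := by
  ext p
  simp only [SetLike.mem_coe, mem_pointwiseStabilizer, Set.mem_iInter, Set.mem_ofPred_eq]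

theorem pointwiseStabilizer_insert (σ : P →* Equiv.Perm V) (v : V) (s : Set V) :
    pointwiseStabilizer σ (insert v s) =
      pointwiseStabilizer σ {v} ⊓ pointwiseStabilizer σ s := by
  rw [Set.insert_eq, pointwiseStabilizer, fixingSubgroup_union, Subgroup.comap_inf]
  rfl

theorem pointwiseStabilizer_anti (σ : P →* Equiv.Perm V) {s t : Set V} (hst : s ⊆ t) :
    pointwiseStabilizer σ t ≤ pointwiseStabilizer σ s :=
  Subgroup.comap_mono (fixingSubgroup_antitone _ _ hst)

theorem exists_finset_map_pointwiseStabilizer_ne_top [TopologicalSpace P] [CompactSpace P]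
    [SeparatelyContinuousMul P] {A : Type*} [Group A] [Nontrivial A] {σ : P →* Equiv.Perm V}
    (hσ : Function.Injective σ) (hclosed : ∀ v, IsClosed {p | σ p v = v})
    (f : P →* A) (hker : IsClosed (f.ker : Set P)) :
    ∃ T : Finset V, (pointwiseStabilizer σ (T : Set V)).map f ≠ ⊤ := by
  by_contra! hmap
  obtain ⟨a, ha⟩ := exists_ne (1 : A)
  obtain ⟨p₀, -, rfl⟩ : a ∈ (pointwiseStabilizer σ ((∅ : Finset V) : Set V)).map f :=
    hmap ∅ ▸ Subgroup.mem_top a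
  have hfibre : IsClosed {p | f p = f p₀} := by
    have : {p | f p = f p₀} = (p₀⁻¹ * ·) ⁻¹' (f.ker : Set P) := by
      ext p
      simp [MonoidHom.mem_ker, inv_mul_eq_one, eq_comm (a := f p)]
    rw [this]
    exact hker.preimage (continuous_const_mul p₀⁻¹)
  obtain ⟨p, hp, hfix⟩ : ({p | f p = f p₀} ∩ ⋂ v, {p | σ p v = v}).Nonempty := by
    refine hfibre.isCompact.inter_iInter_nonempty _ hclosed fun T => ?_
    obtain ⟨p, hpT, hp⟩ : f p₀ ∈ (pointwiseStabilizer σ (T : Set V)).map f :=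
      hmap T ▸ Subgroup.mem_top _
    exact ⟨p, hp, (coe_pointwiseStabilizer σ T).subset hpT⟩
  have hp_one : p = 1 :=
    (map_eq_one_iff σ hσ).1 (Equiv.ext fun v => Set.mem_iInter.1 hfix v)
  rw [hp_one, Set.mem_ofPred_eq, map_one] at hp
  exact ha hp.symm

end PointwiseStabilizer

section LocalAction

variable {P V : Type*} [Group P] {Γ : SimpleGraph V} {σ : P →* Equiv.Perm V}
  (hpres : ∀ (p : P) (u v : V), Γ.Adj u v → Γ.Adj (σ p u) (σ p v))

/-- The point stabilizer `L_w` of a neighbour `w` of `v` in the local action `L` at `v`. -/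
def localStabilizer (Γ : SimpleGraph V) (σ : P →* Equiv.Perm V)
    (hpres : ∀ (p : P) (u v : V), Γ.Adj u v → Γ.Adj (σ p u) (σ p v))
    (v : V) (w : Γ.neighborSet v) : Subgroup (Equiv.Perm (Γ.neighborSet v)) :=
  localAction Γ σ hpres v ⊓ MulAction.stabilizer (Equiv.Perm (Γ.neighborSet v)) w

/-- The action of a subgroup `Q` fixing `v` on the neighbours of `v`. -/
def localHom {v : V} {Q : Subgroup P} (hQ : Q ≤ pointwiseStabilizer σ {v}) :
    Q →* Equiv.Perm (Γ.neighborSet v) where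
  toFun q := localPerm Γ σ hpres v q (mem_pointwiseStabilizer.1 (hQ q.2) v rfl)
  map_one' := by
    ext u
    simp [localPerm]
  map_mul' p q := by
    ext u
    exact Equiv.congr_fun (map_mul σ p.1 q.1) u

theorem map_subtype_ker_localHom_le {v : V} {Q : Subgroup P}
    (hQ : Q ≤ pointwiseStabilizer σ {v}) :
    (localHom hpres hQ).ker.map Q.subtype ≤ pointwiseStabilizer σ (Γ.neighborSet v) := by
  rintro _ ⟨q, hq, rfl⟩
  exact mem_pointwiseStabilizer.2 fun u hu => congrArg Subtype.val (Equiv.congr_fun hq ⟨u, hu⟩)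

theorem range_localHom_le_localStabilizer {v : V} (w : Γ.neighborSet v) {Q : Subgroup P}
    (hv : Q ≤ pointwiseStabilizer σ {v}) (hw : Q ≤ pointwiseStabilizer σ {w.1}) :
    (localHom hpres hv).range ≤ localStabilizer Γ σ hpres v w := by
  rintro _ ⟨q, rfl⟩
  exact ⟨⟨q, mem_pointwiseStabilizer.1 (hv q.2) v rfl, rfl⟩,
    Subtype.ext (mem_pointwiseStabilizer.1 (hw q.2) w rfl)⟩

theorem localStabilizer_comp_le {P' : Type*} [Group P'] (j : P' →* P) (v : V)
    (w : Γ.neighborSet v) :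
    localStabilizer Γ (σ.comp j) (fun p => hpres (j p)) v w ≤ localStabilizer Γ σ hpres v w := by
  rintro _ ⟨⟨p, hp, rfl⟩, hw⟩
  exact ⟨⟨j p, hp, rfl⟩, hw⟩

theorem adj_apply_iff (hpres : ∀ (p : P) (u v : V), Γ.Adj u v → Γ.Adj (σ p u) (σ p v))
    (p : P) {u v : V} : Γ.Adj (σ p u) (σ p v) ↔ Γ.Adj u v := by
  refine ⟨fun h => ?_, hpres p u v⟩
  simpa using hpres p⁻¹ _ _ h

/-- The bijection from the neighbours of `v` to the neighbours of `σ p v` induced by `p`. -/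
def neighborEquiv (p : P) (v : V) : Γ.neighborSet v ≃ Γ.neighborSet (σ p v) :=
  (σ p).subtypeEquiv fun _ => (adj_apply_iff hpres p).symm

@[simp]
theorem coe_neighborEquiv_apply (p : P) (v : V) (u : Γ.neighborSet v) :
    (neighborEquiv hpres p v u : V) = σ p u :=
  rfl

theorem permCongr_mem_localStabilizer (p : P) {v : V} {w : Γ.neighborSet v}
    {τ : Equiv.Perm (Γ.neighborSet v)} (hτ : τ ∈ localStabilizer Γ σ hpres v w) :
    (neighborEquiv hpres p v).permCongr τ ∈
      localStabilizer Γ σ hpres (σ p v) (neighborEquiv hpres p v w) := by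
  obtain ⟨⟨q, hq, rfl⟩, hw⟩ := hτ
  refine ⟨⟨p * q * p⁻¹, by simp [hq], ?_⟩, ?_⟩
  · ext u
    obtain ⟨u, rfl⟩ := (neighborEquiv hpres p v).surjective u
    simp [localPerm, Equiv.permCongr_apply]
  · have hw : localPerm Γ σ hpres v q hq w = w := hw
    simp [MulAction.mem_stabilizer_iff, Equiv.permCongr_apply, hw]

theorem IsSubquotient.localStabilizer_neighborEquiv {A : Type*} [Group A] {v : V}
    {w : Γ.neighborSet v} (h : IsSubquotient A (localStabilizer Γ σ hpres v w)) (p : P) :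
    IsSubquotient A (localStabilizer Γ σ hpres (σ p v) (neighborEquiv hpres p v w)) := by
  let e := (neighborEquiv hpres p v).permCongrHom
  refine h.of_injective (e.toMonoidHom.comp (Subgroup.subtype _))
    (e.injective.comp (Subgroup.subtype_injective _)) ?_
  rintro _ ⟨τ, rfl⟩
  exact permCongr_mem_localStabilizer hpres p τ.2

section SimpleQuotient

variable {A : Type*} [Group A] [IsSimpleGroup A] (f : P →* A)

theorem isSubquotient_localStabilizer_or_exists_le {v : V} (w : Γ.neighborSet v) {Q : Subgroup P}
    (hQ : Q.map f = ⊤) (hv : Q ≤ pointwiseStabilizer σ {v}) (hw : Q ≤ pointwiseStabilizer σ {w.1}) :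
    IsSubquotient A (localStabilizer Γ σ hpres v w) ∨
      ∃ R ≤ Q, R.map f = ⊤ ∧ R ≤ pointwiseStabilizer σ (Γ.neighborSet v) := by
  have hfQ : Function.Surjective (f.comp Q.subtype) := by
    rw [← MonoidHom.range_eq_top, MonoidHom.range_comp, Q.range_subtype, hQ]
  refine (isSubquotient_or_map_ker_eq_top (localHom hpres hv) (f.comp Q.subtype) hfQ
    (range_localHom_le_localStabilizer hpres w hv hw)).imp_right fun htop => ?_
  exact ⟨_, Subgroup.map_subtype_le _, (Subgroup.map_map _ _ _).trans htop,
    map_subtype_ker_localHom_le hpres hv⟩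

theorem exists_le_pointwiseStabilizer_closedNeighborSet
    (hno : ∀ v w, ¬ IsSubquotient A (localStabilizer Γ σ hpres v w)) (hΓ : Γ.Connected)
    {α : V} {Q : Subgroup P} (hQ : Q.map f = ⊤)
    (hα : Q ≤ pointwiseStabilizer σ (insert α (Γ.neighborSet α))) (v : V) :
    ∃ R ≤ Q, R.map f = ⊤ ∧ R ≤ pointwiseStabilizer σ (insert v (Γ.neighborSet v)) := by
  have hwalk := (SimpleGraph.reachable_iff_reflTransGen α v).1 (hΓ.preconnected α v)
  induction hwalk with
  | refl => exact ⟨Q, le_rfl, hQ, hα⟩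
  | @tail u v _ huv ih =>
    obtain ⟨R, hRQ, hR, hRu⟩ := ih
    have hu : R ≤ pointwiseStabilizer σ {u} :=
      hRu.trans (pointwiseStabilizer_anti σ (by simp))
    have hv : R ≤ pointwiseStabilizer σ {v} :=
      hRu.trans (pointwiseStabilizer_anti σ (by simp [huv]))
    obtain ⟨R', hR'R, hR', hR'v⟩ :=
      (isSubquotient_localStabilizer_or_exists_le hpres f ⟨u, huv.symm⟩ hR hv hu).resolve_left
        (hno v _)
    refine ⟨R', hR'R.trans hRQ, hR', ?_⟩
    rw [pointwiseStabilizer_insert]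
    exact le_inf (hR'R.trans hv) hR'v

theorem exists_le_pointwiseStabilizer_finset
    (hno : ∀ v w, ¬ IsSubquotient A (localStabilizer Γ σ hpres v w)) (hΓ : Γ.Connected)
    {α : V} {Q : Subgroup P} (hQ : Q.map f = ⊤)
    (hα : Q ≤ pointwiseStabilizer σ (insert α (Γ.neighborSet α))) (T : Finset V) :
    ∃ R ≤ Q, R.map f = ⊤ ∧ R ≤ pointwiseStabilizer σ (T : Set V) := by
  classical
  induction T using Finset.induction_on with
  | empty => exact ⟨Q, le_rfl, hQ, fun q _ => mem_pointwiseStabilizer.2 (by simp)⟩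
  | insert v T _ ih =>
    obtain ⟨R, hRQ, hR, hRT⟩ := ih
    obtain ⟨R', hR'R, hR', hR'v⟩ :=
      exists_le_pointwiseStabilizer_closedNeighborSet hpres f hno hΓ hR (hRQ.trans hα) v
    refine ⟨R', hR'R.trans hRQ, hR', ?_⟩
    rw [Finset.coe_insert, pointwiseStabilizer_insert]
    exact le_inf (hR'v.trans (pointwiseStabilizer_anti σ (by simp))) (hR'R.trans hRT)

end SimpleQuotient

theorem exists_isSubquotient_localStabilizer [TopologicalSpace P] [CompactSpace P]
    [SeparatelyContinuousMul P] {A : Type*} [Group A] [IsSimpleGroup A] (hΓ : Γ.Connected)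
    (hσ : Function.Injective σ) (hclosed : ∀ v, IsClosed {p | σ p v = v})
    {α : V} (hα : pointwiseStabilizer σ (insert α (Γ.neighborSet α)) = ⊤)
    (f : P →* A) (hf : Function.Surjective f) (hker : IsClosed (f.ker : Set P)) :
    ∃ v w, IsSubquotient A (localStabilizer Γ σ hpres v w) := by
  by_contra! hno
  obtain ⟨T, hT⟩ := exists_finset_map_pointwiseStabilizer_ne_top hσ hclosed f hker
  obtain ⟨R, -, hR, hRT⟩ := exists_le_pointwiseStabilizer_finset hpres f hno hΓ
    (Subgroup.map_top_of_surjective f hf) hα.ge T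
  exact hT (top_le_iff.1 (hR.ge.trans (Subgroup.map_mono hRT)))

end LocalAction

namespace IsCayleyAbels

variable {G V : Type*} [Group G] [TopologicalSpace G] {Γ : SimpleGraph V} {ρ : G →* Equiv.Perm V}

theorem map_adj (hCA : IsCayleyAbels Γ ρ) (g : G) (u v : V) (h : Γ.Adj u v) :
    Γ.Adj (ρ g u) (ρ g v) :=
  hCA.2.2.1 g u v h

theorem isOpen_pointwiseStabilizer (hCA : IsCayleyAbels Γ ρ) {s : Set V} (hs : s.Finite) :
    IsOpen (pointwiseStabilizer ρ s : Set G) := by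
  rw [coe_pointwiseStabilizer]
  exact hs.isOpen_biInter fun v _ => (hCA.2.2.2.2 v).2

theorem isClosed_setOf_apply_eq [SeparatelyContinuousMul G] (hCA : IsCayleyAbels Γ ρ) (v : V) :
    IsClosed {g | ρ g v = v} :=
  ((MulAction.stabilizer (Equiv.Perm V) v).comap ρ).isClosed_of_isOpen (hCA.2.2.2.2 v).2

theorem isCompact_pointwiseStabilizer [SeparatelyContinuousMul G] (hCA : IsCayleyAbels Γ ρ)
    {s : Set V} (hs : s.Nonempty) :
    IsCompact (pointwiseStabilizer ρ s : Set G) := by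
  obtain ⟨v, hv⟩ := hs
  rw [coe_pointwiseStabilizer]
  exact (hCA.2.2.2.2 v).1.of_isClosed_subset
    (isClosed_biInter fun u _ => hCA.isClosed_setOf_apply_eq u) (Set.biInter_subset_of_mem hv)

end IsCayleyAbels

theorem local_simple_content_subquotient_of_local_action_general
    {G V : Type*} [Group G] [TopologicalSpace G] [IsTopologicalGroup G]
    {Γ : SimpleGraph V} {ρ : G →* Equiv.Perm V} (hCA : IsCayleyAbels Γ ρ)
    (hρ : Function.Injective ρ) (α : V) {A : Type*} [Group A] [IsSimpleGroup A]
    (hA : IsCompositionFactor (pointwiseStabilizer ρ (insert α (Γ.neighborSet α))) A) :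
    (∃ β, IsSubquotient A (localStabilizer Γ ρ hCA.map_adj α β)) ∧
      IsSubquotient A (⊤ : Subgroup (Equiv.Perm (Fin ((Γ.neighborSet α).ncard - 1)))) := by
  have ⟨hΓ, hfinite, _, htrans, _⟩ := hCA
  obtain ⟨P, f, hP, hf, hker⟩ := hA.exists_isClosed_surjective
  have : CompactSpace (pointwiseStabilizer ρ (insert α (Γ.neighborSet α))) :=
    isCompact_iff_compactSpace.1
      (hCA.isCompact_pointwiseStabilizer (Set.insert_nonempty α (Γ.neighborSet α)))
  have : CompactSpace P := isCompact_iff_compactSpace.1 hP.isCompact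
  let j : P →* G := (Subgroup.subtype _).comp P.subtype
  have hj : Function.Injective j := (Subgroup.subtype_injective _).comp P.subtype_injective
  have hfix : pointwiseStabilizer (ρ.comp j) (insert α (Γ.neighborSet α)) = ⊤ :=
    top_le_iff.1 fun p _ => p.1.2
  have hclosed (v : V) : IsClosed {p | ρ.comp j p v = v} :=
    (hCA.isClosed_setOf_apply_eq v).preimage
      (continuous_subtype_val.comp continuous_subtype_val : Continuous j)
  obtain ⟨v, w, hvw⟩ := exists_isSubquotient_localStabilizer (σ := ρ.comp j)
    (fun p => hCA.map_adj (j p)) hΓ (hρ.comp hj) hclosed hfix f hf hker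
  obtain ⟨g, rfl⟩ := htrans v α
  have hρvw := hvw.mono (localStabilizer_comp_le hCA.map_adj j v w)
  have hβ := hρvw.localStabilizer_neighborEquiv _ g
  have : Finite (Γ.neighborSet (ρ g v)) := hfinite _
  exact ⟨⟨_, hβ⟩, Nat.card_coe_set_eq (Γ.neighborSet (ρ g v)) ▸
    hβ.perm_fin_of_le_stabilizer inf_le_right⟩

/-- Theorem (local simple content vs.\ local action): let `G` be a second countable
t.d.l.c. group acting faithfully on a Cayley–Abels graph `Γ` of degree `d`, let `α` be a
vertex and `L` the local action of `G` at `α`.  If a finite simple group `A` is a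
composition factor of every compact open subgroup of `G`, then `A` is a subquotient of the
stabilizer `L_β` of some neighbour `β` of `α` in `L`; in particular `A` is a subquotient
of the symmetric group on `d - 1` letters. -/
theorem local_simple_content_subquotient_of_local_action
    {G V : Type*} [Group G] [TopologicalSpace G]
    [IsTopologicalGroup G] [T2Space G] [TotallyDisconnectedSpace G] [LocallyCompactSpace G]
    [SecondCountableTopology G]
    (Γ : SimpleGraph V) (ρ : G →* Equiv.Perm V) (hCA : IsCayleyAbels Γ ρ)
    (hpres : ∀ (g : G) (u v : V), Γ.Adj u v → Γ.Adj (ρ g u) (ρ g v))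
    (hfaith : ∀ g : G, (∀ v : V, ρ g v = v) → g = 1)
    (d : ℕ) (hdeg : ∀ v : V, (Γ.neighborSet v).ncard = d)
    (α : V)
    (A : Type*) [Group A] [Finite A] [IsSimpleGroup A]
    (hA : ∀ U : Subgroup G, IsCompact (U : Set G) → IsOpen (U : Set G) →
      IsCompositionFactor ↥U A) :
    (∃ (β : V) (hβ : β ∈ Γ.neighborSet α)
        (H N : Subgroup (Equiv.Perm (Γ.neighborSet α))) (_ : N ≤ H)
        (hn : (N.subgroupOf H).Normal),
      H ≤ localAction Γ ρ hpres α ⊓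
          MulAction.stabilizer (Equiv.Perm (Γ.neighborSet α)) (⟨β, hβ⟩ : Γ.neighborSet α) ∧
      Nonempty (letI := hn; (↥H ⧸ N.subgroupOf H) ≃* A)) ∧
    (∃ (H N : Subgroup (Equiv.Perm (Fin (d - 1)))) (_ : N ≤ H)
        (hn : (N.subgroupOf H).Normal),
      Nonempty (letI := hn; (↥H ⧸ N.subgroupOf H) ≃* A)) := by
  obtain ⟨⟨β, hβ⟩, hSym⟩ := local_simple_content_subquotient_of_local_action_general hCA
    ((injective_iff_map_eq_one ρ).2 fun g hg => hfaith g (Equiv.congr_fun hg)) α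
    (hA _ (hCA.isCompact_pointwiseStabilizer (Set.insert_nonempty α _))
      (hCA.isOpen_pointwiseStabilizer ((hCA.2.1 α).insert α)))
  obtain ⟨H, N, hNH, hn, -, e⟩ := (hdeg α ▸ hSym).exists_quotient_mulEquiv
  exact ⟨⟨β, β.2, hβ.exists_quotient_mulEquiv⟩, H, N, hNH, hn, e⟩
end

section
/- Let G be a non-discrete, second countable t.d.l.c. group, let A be a finite simple group that is a composition factor of every compact open subgroup of G, and let p be a prime dividing the order of A. Then p belongs to the local prime content of G: every compact open subgroup U of G contains a compact open subgroup V of G with p dividing the index [U : V]. -/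
/-!
A finite factor `H i / H (i + 1)` of a composition series of a profinite group is discrete, so some
open normal subgroup `W` satisfies `W ⊓ H i ≤ H (i + 1)`. Hence `[H i : H (i + 1)]` divides
`[H i : W ⊓ H i] = [W H i : W]`, which divides `[P : W]`, `P` being the whole profinite group.
-/

theorem ProfiniteCompositionSeries.card_factor {G : Type*} [Group G] [TopologicalSpace G]
    (S : ProfiniteCompositionSeries G) (i : ℕ) :
    Nat.card (S.factor i) = (S.H (i + 1)).relIndex (S.H i) :=
  rfl

section Profinite

variable {P : Type*} [Group P] [TopologicalSpace P] [IsTopologicalGroup P] [CompactSpace P]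
  [TotallyDisconnectedSpace P]

theorem exists_openNormalSubgroup_inf_le_of_isClosed {N : Subgroup P}
    (hN : IsClosed (N : Set P)) (H : Subgroup P) [N.IsFiniteRelIndex H] :
    ∃ W : OpenNormalSubgroup P, W.toSubgroup ⊓ H ≤ N := by
  have : (N.subgroupOf H).FiniteIndex := Subgroup.IsFiniteRelIndex.to_finiteIndex_subgroupOf
  have isOpen_subgroupOf : IsOpen (N.subgroupOf H : Set H) :=
    Subgroup.isOpen_of_isClosed_of_finiteIndex _ (hN.preimage continuous_subtype_val)
  obtain ⟨O, hO, preimage_eq⟩ := isOpen_induced_iff.mp isOpen_subgroupOf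
  have mem_iff (x : H) : (x : P) ∈ O ↔ (x : P) ∈ N := Set.ext_iff.mp preimage_eq x
  obtain ⟨W, hWO⟩ := ProfiniteGrp.exist_openNormalSubgroup_sub_open_nhds_of_one hO
    ((mem_iff 1).mpr N.one_mem)
  exact ⟨W, fun x ⟨hxW, hxH⟩ ↦ (mem_iff ⟨x, hxH⟩).mp (hWO hxW)⟩

theorem exists_openNormalSubgroup_relIndex_dvd_index {N : Subgroup P}
    (hN : IsClosed (N : Set P)) (H : Subgroup P) [N.IsFiniteRelIndex H] :
    ∃ W : OpenNormalSubgroup P, N.relIndex H ∣ W.toSubgroup.index := by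
  obtain ⟨W, hW⟩ := exists_openNormalSubgroup_inf_le_of_isClosed hN H
  refine ⟨W, ?_⟩
  calc N.relIndex H
    _ ∣ (W.toSubgroup ⊓ H).relIndex H := Subgroup.relIndex_dvd_of_le_left H hW
    _ = W.toSubgroup.relIndex H := Subgroup.inf_relIndex_right _ _
    _ ∣ W.toSubgroup.index := Subgroup.relIndex_dvd_index_of_normal _ _

theorem IsCompositionFactor.exists_openNormalSubgroup_card_dvd_index {A : Type*} [Group A]
    [Finite A] (hA : IsCompositionFactor P A) :
    ∃ W : OpenNormalSubgroup P, Nat.card A ∣ W.toSubgroup.index := by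
  obtain ⟨S, i, -, ⟨e⟩⟩ := hA
  have relIndex_eq : (S.H (i + 1)).relIndex (S.H i) = Nat.card A :=
    (S.card_factor i).symm.trans (Nat.card_congr e.toEquiv)
  have : (S.H (i + 1)).IsFiniteRelIndex (S.H i) := ⟨relIndex_eq ▸ Nat.card_pos.ne'⟩
  exact relIndex_eq ▸ exists_openNormalSubgroup_relIndex_dvd_index (S.isClosed (i + 1)) (S.H i)

end Profinite

theorem relIndex_map_subtype {G : Type*} [Group G] {U : Subgroup G} (W : Subgroup U) :
    (W.map U.subtype).relIndex U = W.index := by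
  rw [Subgroup.relIndex, Subgroup.subgroupOf,
    Subgroup.comap_map_eq_self_of_injective U.subtype_injective]

theorem prime_of_local_simple_content_mem_local_prime_content_general
    {G : Type*} [Group G] [TopologicalSpace G] [IsTopologicalGroup G] [TotallyDisconnectedSpace G]
    {A : Type*} [Group A] [Finite A] {U : Subgroup G} (hUc : IsCompact (U : Set G))
    (hUo : IsOpen (U : Set G)) (hA : IsCompositionFactor U A) :
    ∃ V : Subgroup G, IsCompact (V : Set G) ∧ IsOpen (V : Set G) ∧ V ≤ U ∧
      Nat.card A ∣ V.relIndex U := by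
  have : CompactSpace U := isCompact_iff_compactSpace.mp hUc
  obtain ⟨W, hW⟩ := hA.exists_openNormalSubgroup_card_dvd_index
  exact ⟨W.toSubgroup.map U.subtype,
    W.toOpenSubgroup.isClosed.isCompact.image continuous_subtype_val,
    hUo.isOpenMap_subtype_val _ W.toOpenSubgroup.isOpen,
    Subgroup.map_subtype_le _,
    (relIndex_map_subtype W.toSubgroup).symm ▸ hW⟩

/-- Let `G` be a non-discrete second countable t.d.l.c. group, `A` a finite simple group
that is a composition factor of every compact open subgroup of `G`, and `p` a prime
dividing the order of `A`.  Then `p` belongs to the local prime content of `G`: every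
compact open subgroup `U` of `G` contains a compact open subgroup `V` with `p ∣ [U : V]`. -/
theorem prime_of_local_simple_content_mem_local_prime_content
    (G : Type*) [Group G] [TopologicalSpace G]
    [IsTopologicalGroup G] [T2Space G] [TotallyDisconnectedSpace G] [LocallyCompactSpace G]
    [SecondCountableTopology G] (hnd : ¬ DiscreteTopology G)
    (A : Type*) [Group A] [Finite A] [IsSimpleGroup A]
    (hA : ∀ U : Subgroup G, IsCompact (U : Set G) → IsOpen (U : Set G) →
      IsCompositionFactor ↥U A)
    (p : ℕ) (hp : p.Prime) (hdvd : p ∣ Nat.card A) :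
    ∀ U : Subgroup G, IsCompact (U : Set G) → IsOpen (U : Set G) →
      ∃ V : Subgroup G, IsCompact (V : Set G) ∧ IsOpen (V : Set G) ∧ V ≤ U ∧
        p ∣ V.relIndex U := by
  intro U hUc hUo
  exact (prime_of_local_simple_content_mem_local_prime_content_general hUc hUo (hA U hUc hUo)).imp
    fun _ ⟨hVc, hVo, hVU, card_dvd⟩ ↦ ⟨hVc, hVo, hVU, hdvd.trans card_dvd⟩
end

section
/- Let Γ be a locally finite simple graph, let G be a group acting vertex-transitively on Γ by graph automorphisms, and let N be a normal subgroup of G. Define the quotient graph Γ/N: its vertices are the N-orbits on the vertices of Γ, and two distinct orbits A ≠ B are adjacent if and only if some vertex in A is adjacent in Γ to some vertex in B. Then the degree of each vertex of Γ/N is at most the degree of Γ (the common vertex degree of Γ). Moreover, the degree of Γ/N equals the degree of Γ if and only if no two distinct vertices of Γ at distance at most 2 lie in the same N-orbit. -/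
/-- The setoid on the vertex set whose classes are the orbits of the subgroup `N`,
acting through `ρ`. -/
def orbitSetoid {G V : Type*} [Group G] (ρ : G →* Equiv.Perm V) (N : Subgroup G) :
    Setoid V where
  r v w := ∃ k ∈ N, ρ k v = w
  iseqv := by
    constructor
    · intro v
      exact ⟨1, one_mem N, by simp⟩
    · rintro v w ⟨k, hk, rfl⟩
      refine ⟨k⁻¹, inv_mem hk, ?_⟩
      simp
    · rintro u v w ⟨k, hk, rfl⟩ ⟨l, hl, rfl⟩
      exact ⟨l * k, mul_mem hl hk, by simp⟩

/-- The quotient graph of a simple graph by an equivalence relation on its vertices: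
two distinct classes are adjacent iff some element of one is adjacent to some element of
the other. -/
def quotientGraph {V : Type*} (Γ : SimpleGraph V) (s : Setoid V) :
    SimpleGraph (Quotient s) where
  Adj A B := A ≠ B ∧ ∃ a b : V, Quotient.mk s a = A ∧ Quotient.mk s b = B ∧ Γ.Adj a b
  symm := by
    constructor
    rintro A B ⟨hne, a, b, ha, hb, hab⟩
    exact ⟨hne.symm, b, a, hb, ha, hab.symm⟩
  loopless := by
    constructor
    rintro A ⟨hne, -⟩
    exact hne rfl

/-! Acting by `N`, any edge leaving the orbit of `v` can be moved to start at `v`, so the neighbours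
of the orbit of `v` are the orbits of the neighbours of `v`, other than the orbit of `v` itself.
Degree is lost exactly when a neighbour of `v` lies in the orbit of `v` (two equivalent vertices at
distance `1`) or two neighbours of `v` share an orbit (two equivalent vertices at distance at most
`2`). -/

section ImageSdiffSingleton

variable {α β : Type*} {f : α → β} {t : Set α}

theorem ncard_image_sdiff_singleton_le (ht : t.Finite) (b : β) :
    (f '' t \ {b}).ncard ≤ t.ncard :=
  (Set.ncard_sdiff_singleton_le _ b).trans (Set.ncard_image_le ht)

theorem ncard_image_sdiff_singleton_eq_iff (ht : t.Finite) (b : β) :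
    (f '' t \ {b}).ncard = t.ncard ↔ b ∉ f '' t ∧ Set.InjOn f t := by
  constructor
  · intro hcard
    have hle : (f '' t).ncard ≤ t.ncard := Set.ncard_image_le ht
    have hb : b ∉ f '' t := fun hb =>
      (Set.ncard_sdiff_singleton_lt_of_mem hb (ht.image f)).not_ge (hle.trans hcard.ge)
    rw [Set.sdiff_singleton_eq_self hb] at hcard
    exact ⟨hb, Set.injOn_of_ncard_image_eq hcard ht⟩
  · rintro ⟨hb, hinj⟩
    rw [Set.sdiff_singleton_eq_self hb, hinj.ncard_image]

end ImageSdiffSingleton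

/-- The adjacency-lifting property of an equivalence relation `s` on the vertices of `Γ`: an edge
leaving a class can be moved, within the classes of its ends, to start at any vertex of that class.
The orbits of a group of automorphisms enter the degree count through it. -/
def LiftsAdj {V : Type*} (Γ : SimpleGraph V) (s : Setoid V) : Prop :=
  ∀ ⦃a a' b : V⦄, s a a' → Γ.Adj a b → ∃ b', s b b' ∧ Γ.Adj a' b'

theorem orbitSetoid_apply {G V : Type*} [Group G] {ρ : G →* Equiv.Perm V} {N : Subgroup G}
    {u v : V} : orbitSetoid ρ N u v ↔ ∃ k ∈ N, ρ k u = v :=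
  Iff.rfl

theorem liftsAdj_orbitSetoid {G V : Type*} [Group G] {Γ : SimpleGraph V} {ρ : G →* Equiv.Perm V}
    {N : Subgroup G} (hpres : ∀ k ∈ N, ∀ u v : V, Γ.Adj u v → Γ.Adj (ρ k u) (ρ k v)) :
    LiftsAdj Γ (orbitSetoid ρ N) := by
  rintro a _ b ⟨k, hk, rfl⟩ hab
  exact ⟨ρ k b, ⟨k, hk, rfl⟩, hpres k hk a b hab⟩

namespace LiftsAdj

variable {V : Type*} {Γ : SimpleGraph V} {s : Setoid V}

theorem neighborSet_quotientGraph_mk (hs : LiftsAdj Γ s) (v : V) :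
    (quotientGraph Γ s).neighborSet (Quotient.mk s v) =
      Quotient.mk s '' Γ.neighborSet v \ {Quotient.mk s v} := by
  ext B
  constructor
  · rintro ⟨hne, a, b, hav, rfl, hab⟩
    obtain ⟨b', hbb', hvb'⟩ := hs (Quotient.exact hav) hab
    exact ⟨⟨b', hvb', (Quotient.sound hbb').symm⟩, hne.symm⟩
  · rintro ⟨⟨b, hvb, rfl⟩, hne⟩
    exact ⟨Ne.symm hne, v, b, rfl, rfl, hvb⟩

theorem ncard_neighborSet_quotientGraph_mk_le (hs : LiftsAdj Γ s) {v : V}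
    (hfin : (Γ.neighborSet v).Finite) :
    ((quotientGraph Γ s).neighborSet (Quotient.mk s v)).ncard ≤ (Γ.neighborSet v).ncard := by
  rw [hs.neighborSet_quotientGraph_mk]
  exact ncard_image_sdiff_singleton_le hfin _

theorem ncard_neighborSet_quotientGraph_mk_eq_iff (hs : LiftsAdj Γ s) {v : V}
    (hfin : (Γ.neighborSet v).Finite) :
    ((quotientGraph Γ s).neighborSet (Quotient.mk s v)).ncard = (Γ.neighborSet v).ncard ↔
      (∀ w, Γ.Adj v w → ¬ s v w) ∧
        ∀ a b, Γ.Adj v a → Γ.Adj v b → s a b → a = b := by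
  have hmem : Quotient.mk s v ∉ Quotient.mk s '' Γ.neighborSet v ↔
      ∀ w, Γ.Adj v w → ¬ s v w := by
    simp only [Set.mem_image, SimpleGraph.mem_neighborSet, not_exists, not_and, eq_comm,
      Quotient.eq]
  have hinj : Set.InjOn (Quotient.mk s) (Γ.neighborSet v) ↔
      ∀ a b, Γ.Adj v a → Γ.Adj v b → s a b → a = b := by
    simp only [Set.InjOn, SimpleGraph.mem_neighborSet, Quotient.eq]
    exact ⟨fun h a b ha hb => h ha hb, fun h a ha b hb => h a b ha hb⟩
  rw [hs.neighborSet_quotientGraph_mk, ncard_image_sdiff_singleton_eq_iff hfin, hmem, hinj]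

end LiftsAdj

theorem quotient_graph_degree_general {V : Type*} (Γ : SimpleGraph V)
    (hlf : ∀ v : V, (Γ.neighborSet v).Finite) (s : Setoid V) (hs : LiftsAdj Γ s) :
    (∀ v : V, ((quotientGraph Γ s).neighborSet (Quotient.mk s v)).ncard ≤
        (Γ.neighborSet v).ncard) ∧
    ((∀ v : V, ((quotientGraph Γ s).neighborSet (Quotient.mk s v)).ncard =
        (Γ.neighborSet v).ncard) ↔
      ∀ u v : V, u ≠ v → (Γ.Adj u v ∨ ∃ w : V, Γ.Adj u w ∧ Γ.Adj w v) → ¬ s u v) := by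
  refine ⟨fun v => hs.ncard_neighborSet_quotientGraph_mk_le (hlf v), ?_⟩
  simp only [hs.ncard_neighborSet_quotientGraph_mk_eq_iff (hlf _)]
  constructor
  · rintro hlocal u v huv (hadj | ⟨w, huw, hwv⟩) huv_equiv
    · exact (hlocal u).1 v hadj huv_equiv
    · exact huv ((hlocal w).2 u v huw.symm hwv huv_equiv)
  · refine fun hfar v => ⟨fun w hvw => hfar v w hvw.ne (Or.inl hvw), fun a b hva hvb hab => ?_⟩
    by_contra hne
    exact hfar a b hne (Or.inr ⟨v, hva.symm, hvb⟩) hab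

/-- Let `Γ` be a locally finite graph of degree `d` with a vertex-transitive action of a
group `G`, and let `N` be a normal subgroup of `G`.  Then each vertex of the quotient
graph `Γ/N` (on the `N`-orbits) has degree at most `d`, with equality (for all vertices)
if and only if no two distinct vertices of `Γ` at distance at most `2` lie in the same
`N`-orbit. -/
theorem quotient_graph_degree {G V : Type*} [Group G]
    (Γ : SimpleGraph V) (hlf : ∀ v : V, (Γ.neighborSet v).Finite)
    (ρ : G →* Equiv.Perm V)
    (hpres : ∀ (g : G) (u v : V), Γ.Adj u v → Γ.Adj (ρ g u) (ρ g v))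
    (htrans : ∀ u v : V, ∃ g : G, ρ g u = v)
    (N : Subgroup G) (hN : N.Normal)
    (d : ℕ) (hdeg : ∀ v : V, (Γ.neighborSet v).ncard = d) :
    (∀ A : Quotient (orbitSetoid ρ N),
        ((quotientGraph Γ (orbitSetoid ρ N)).neighborSet A).ncard ≤ d) ∧
    ((∀ A : Quotient (orbitSetoid ρ N),
        ((quotientGraph Γ (orbitSetoid ρ N)).neighborSet A).ncard = d) ↔
      ∀ u v : V, u ≠ v → (Γ.Adj u v ∨ ∃ w : V, Γ.Adj u w ∧ Γ.Adj w v) →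
        ¬ ∃ k ∈ N, ρ k u = v) := by
  simpa only [Quotient.forall, hdeg, orbitSetoid_apply] using
    quotient_graph_degree_general Γ hlf _ (liftsAdj_orbitSetoid fun k (_ : k ∈ N) => hpres k)
end
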